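/- arXiv:2602.06168 — 2 statements merged into one kernel-verified Lean document; each statement's English description precedes it below -/
import Mathlib

section
/- Let μ > 0, n a positive integer, f : [0,1] → ℝ, and x ∈ [0,1]. Then the derivative of x ↦ L_n(f, x)/ln_μ(x) satisfies (L_n f / ln_μ)'(x) = a_n'(x) · Σ_{k=0}^{n−1} Δ₁ f_μ(k/n) · p_{n−1,k}(a_n(x)), where Δ₁ f_μ(k/n) := n·( f_μ((k+1)/n) − f_μ(k/n) ) and f_μ(t) := f(t)/ln(1+μ+t). -/
open Real Filter Set

/-- `logμ μ x = ln(1+μ+x)`. -/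
noncomputable def logμ (μ x : ℝ) : ℝ := Real.log (1 + μ + x)

/-- `a μ n x = ln(1 + x/(n(1+μ))) / ln(1 + 1/(n(1+μ)))`. -/
noncomputable def aFun (μ : ℝ) (n : ℕ) (x : ℝ) : ℝ :=
  Real.log (1 + x / (n * (1 + μ))) / Real.log (1 + 1 / (n * (1 + μ)))

/-- Bernstein basis polynomial `p_{n,k}(y) = C(n,k) y^k (1-y)^(n-k)`. -/
noncomputable def pB (n k : ℕ) (y : ℝ) : ℝ :=
  (n.choose k : ℝ) * y ^ k * (1 - y) ^ (n - k)

/-- Classical Bernstein operator. -/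
noncomputable def Bop (n : ℕ) (g : ℝ → ℝ) (y : ℝ) : ℝ :=
  ∑ k ∈ Finset.range (n + 1), g ((k : ℝ) / (n : ℝ)) * pB n k y

/-- Bernstein-type logarithmic operator `L_n`. -/
noncomputable def Lop (μ : ℝ) (n : ℕ) (f : ℝ → ℝ) (x : ℝ) : ℝ :=
  logμ μ x * ∑ k ∈ Finset.range (n + 1),
    f ((k : ℝ) / (n : ℝ)) * (1 / logμ μ ((k : ℝ) / (n : ℝ))) * pB n k (aFun μ n x)

theorem pB_eq_eval (n k : ℕ) (y : ℝ) : pB n k y = (bernsteinPolynomial ℝ n k).eval y := by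
  simp [pB, bernsteinPolynomial]

theorem hasDerivAt_pB_zero (m : ℕ) (y : ℝ) :
    HasDerivAt (pB (m + 1) 0) (-((m : ℝ) + 1) * pB m 0 y) y := by
  have h := (bernsteinPolynomial ℝ (m + 1) 0).hasDerivAt y
  rw [bernsteinPolynomial.derivative_zero] at h
  have e : pB (m + 1) 0 = fun y => (bernsteinPolynomial ℝ (m + 1) 0).eval y := by
    funext y; exact pB_eq_eval _ _ _
  rw [e, pB_eq_eval]
  simpa using h

theorem hasDerivAt_pB_succ (m k : ℕ) (y : ℝ) :
    HasDerivAt (pB (m + 1) (k + 1)) (((m : ℝ) + 1) * (pB m k y - pB m (k + 1) y)) y := by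
  have h := (bernsteinPolynomial ℝ (m + 1) (k + 1)).hasDerivAt y
  rw [bernsteinPolynomial.derivative_succ] at h
  have e : pB (m + 1) (k + 1) = fun y => (bernsteinPolynomial ℝ (m + 1) (k + 1)).eval y := by
    funext y; exact pB_eq_eval _ _ _
  rw [e, pB_eq_eval, pB_eq_eval]
  simpa using h

theorem hasDerivAt_bernstein_sum (m : ℕ) (g : ℕ → ℝ) (y : ℝ) :
    HasDerivAt (fun y => ∑ k ∈ Finset.range (m + 1 + 1), g k * pB (m + 1) k y)
      (∑ k ∈ Finset.range (m + 1), (((m : ℝ) + 1) * (g (k + 1) - g k)) * pB m k y) y := by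
  have h1 : HasDerivAt (fun y => ∑ k ∈ Finset.range (m + 1), g (k + 1) * pB (m + 1) (k + 1) y)
      (∑ k ∈ Finset.range (m + 1), g (k + 1) * (((m : ℝ) + 1) * (pB m k y - pB m (k + 1) y))) y :=
    HasDerivAt.fun_sum fun k _ => (hasDerivAt_pB_succ m k y).const_mul _
  have h2 := h1.add ((hasDerivAt_pB_zero m y).const_mul (g 0))
  have key : ∑ k ∈ Finset.range (m + 1), g k * pB m k y
      = ∑ k ∈ Finset.range (m + 1), g (k + 1) * pB m (k + 1) y + g 0 * pB m 0 y := by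
    rw [← Finset.sum_range_succ' (fun k => g k * pB m k y), Finset.sum_range_succ _ (m + 1)]
    simp [pB]
  have hfun : (fun y => ∑ k ∈ Finset.range (m + 1 + 1), g k * pB (m + 1) k y) =
      (fun y => ∑ k ∈ Finset.range (m + 1), g (k + 1) * pB (m + 1) (k + 1) y) +
        fun y => g 0 * pB (m + 1) 0 y := by
    funext y
    simp only [Pi.add_apply]
    exact Finset.sum_range_succ' _ _
  rw [hfun]
  refine h2.congr_deriv (Eq.symm ?_)
  · have e1 : ∑ k ∈ Finset.range (m + 1), (((m : ℝ) + 1) * (g (k + 1) - g k)) * pB m k y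
        = ((m : ℝ) + 1) * (∑ k ∈ Finset.range (m + 1), g (k + 1) * pB m k y
          - ∑ k ∈ Finset.range (m + 1), g k * pB m k y) := by
      rw [← Finset.sum_sub_distrib, Finset.mul_sum]
      exact Finset.sum_congr rfl fun k _ => by ring
    have e2 : ∑ k ∈ Finset.range (m + 1), g (k + 1) * (((m : ℝ) + 1) * (pB m k y - pB m (k + 1) y))
        = ((m : ℝ) + 1) * (∑ k ∈ Finset.range (m + 1), g (k + 1) * pB m k y
          - ∑ k ∈ Finset.range (m + 1), g (k + 1) * pB m (k + 1) y) := by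
      rw [← Finset.sum_sub_distrib, Finset.mul_sum]
      exact Finset.sum_congr rfl fun k _ => by ring
    rw [e1, e2, key]
    ring

theorem stmt15 (μ : ℝ) (hμ : 0 < μ) (n : ℕ) (hn : 0 < n) (f : ℝ → ℝ) (x : ℝ)
    (hx : x ∈ Set.Icc (0:ℝ) 1) :
    deriv (fun t => Lop μ n f t / logμ μ t) x =
      deriv (aFun μ n) x * ∑ k ∈ Finset.range n,
        ((n : ℝ) * (f (((k : ℝ) + 1) / (n : ℝ)) / logμ μ (((k : ℝ) + 1) / (n : ℝ)) -
            f ((k : ℝ) / (n : ℝ)) / logμ μ ((k : ℝ) / (n : ℝ)))) *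
          pB (n - 1) k (aFun μ n x) := by
  obtain ⟨m, rfl⟩ : ∃ m, n = m + 1 := ⟨n - 1, by omega⟩
  have hx0 := hx.1
  have ha : DifferentiableAt ℝ (aFun μ (m + 1)) x := by
    have hpos : 0 < 1 + x / (((m + 1 : ℕ) : ℝ) * (1 + μ)) := by positivity
    have hin : DifferentiableAt ℝ (fun t : ℝ => 1 + t / (((m + 1 : ℕ) : ℝ) * (1 + μ))) x :=
      (differentiableAt_id.div_const _).const_add 1
    exact (hin.log hpos.ne').div_const _
  have hev : (fun t => Lop μ (m + 1) f t / logμ μ t) =ᶠ[nhds x]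
      fun t => ∑ k ∈ Finset.range (m + 1 + 1),
        (f ((k : ℝ) / ((m + 1 : ℕ) : ℝ)) / logμ μ ((k : ℝ) / ((m + 1 : ℕ) : ℝ))) *
          pB (m + 1) k (aFun μ (m + 1) t) := by
    filter_upwards [Ioi_mem_nhds (show -μ < x by linarith)] with t ht
    have ht' : -μ < t := ht
    have hl : logμ μ t ≠ 0 := (Real.log_pos (by linarith)).ne'
    unfold Lop
    rw [mul_div_cancel_left₀ _ hl]
    exact Finset.sum_congr rfl fun k _ => by rw [mul_one_div]
  rw [hev.deriv_eq]
  have h := (hasDerivAt_bernstein_sum m (fun k => f ((k : ℝ) / ((m + 1 : ℕ) : ℝ)) /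
    logμ μ ((k : ℝ) / ((m + 1 : ℕ) : ℝ))) (aFun μ (m + 1) x)).comp x ha.hasDerivAt
  refine Eq.trans h.deriv ?_
  rw [mul_comm]
  simp
end

section
/- Let μ > 0 and let f : [0,1] → ℝ be such that f_μ := f/ln_μ is monotone increasing and convex on [0,1]. Then for every positive integer n and every x ∈ (0,1), L_n(f, x) ≥ L_{n+1}(f, x) ≥ f(x). -/
open Real Filter Set

theorem pB_nonneg (n k : ℕ) (y : ℝ) (h0 : 0 ≤ y) (h1 : y ≤ 1) : 0 ≤ pB n k y := by
  unfold pB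
  have : 0 ≤ 1 - y := by linarith
  positivity

theorem pB_succ_zero (n : ℕ) (y : ℝ) : pB (n+1) 0 y = (1 - y) * pB n 0 y := by
  simp [pB, pow_succ]; ring

theorem pB_self_succ (n : ℕ) (y : ℝ) : pB n (n+1) y = 0 := by
  simp [pB]

theorem pB_succ_succ (n k : ℕ) (y : ℝ) :
    pB (n+1) (k+1) y = y * pB n k y + (1 - y) * pB n (k+1) y := by
  unfold pB
  rw [Nat.choose_succ_succ]
  rcases lt_or_ge k n with h | h
  · obtain ⟨d, rfl⟩ := Nat.exists_eq_add_of_lt h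
    have e1 : k + d + 1 + 1 - (k + 1) = d + 1 := by omega
    have e2 : k + d + 1 - k = d + 1 := by omega
    have e3 : k + d + 1 - (k + 1) = d := by omega
    rw [e1, e2, e3]; push_cast; ring
  · have e1 : n + 1 - (k + 1) = 0 := by omega
    have e2 : n - k = 0 := by omega
    have e3 : n.choose (k+1) = 0 := Nat.choose_eq_zero_of_lt (by omega)
    rw [e1, e2, e3]; push_cast; ring

theorem pB_elev (n k : ℕ) (hk : k ≤ n) (y : ℝ) :
    pB n k y = ((n:ℝ) + 1 - k) / (n + 1) * pB (n+1) k y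
      + ((k:ℝ) + 1) / (n + 1) * pB (n+1) (k+1) y := by
  unfold pB
  have h1 : ((n:ℝ) + 1) * (n.choose k) = ((n+1).choose (k+1)) * (k + 1) := by
    exact_mod_cast Nat.add_one_mul_choose_eq n k
  have h2 : ((n:ℝ) + 1) * (n.choose k) = ((n+1).choose k) * (n + 1 - k) := by
    have := Nat.choose_mul_succ_eq n k
    have h := congrArg (Nat.cast : ℕ → ℝ) this
    rw [Nat.cast_mul, Nat.cast_mul, Nat.cast_sub (by omega)] at h
    push_cast at h
    linarith
  have e1 : n + 1 - (k + 1) = n - k := by omega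
  have e2 : n + 1 - k = n - k + 1 := by omega
  have hn : (n:ℝ) + 1 ≠ 0 := by positivity
  rw [e1, e2]
  field_simp
  rw [pow_succ, pow_succ]
  linear_combination (y ^ k * (1-y)^(n-k) * (1-y)) * h2 + (y ^ k * (1-y)^(n-k) * y) * h1

noncomputable def bS (n : ℕ) (c : ℕ → ℝ) (y : ℝ) : ℝ :=
  ∑ k ∈ Finset.range (n + 1), c k * pB n k y

theorem bS_succ (n : ℕ) (c : ℕ → ℝ) (y : ℝ) :
    bS (n+1) c y = (1 - y) * bS n c y + y * bS n (fun k => c (k+1)) y := by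
  unfold bS
  rw [Finset.sum_range_succ']
  have h : ∑ k ∈ Finset.range (n + 1), c k * pB n k y
      = ∑ k ∈ Finset.range (n + 1), c (k+1) * pB n (k+1) y + c 0 * pB n 0 y := by
    rw [← Finset.sum_range_succ' (fun k => c k * pB n k y), Finset.sum_range_succ _ (n+1),
      pB_self_succ]; simp
  rw [h, pB_succ_zero, mul_add, Finset.mul_sum, Finset.mul_sum]
  simp_rw [pB_succ_succ]
  rw [add_right_comm, ← Finset.sum_add_distrib]
  congr 1
  · apply Finset.sum_congr rfl; intros; ring
  · ring

theorem bS_affine (n : ℕ) (a b y : ℝ) : bS n (fun k => a + b * k) y = a + b * n * y := by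
  induction n generalizing a with
  | zero => simp [bS, pB]
  | succ n ih =>
    rw [bS_succ, ih]
    have := ih (a + b)
    have e : (fun k : ℕ => a + b * ((k + 1 : ℕ) : ℝ)) = fun k : ℕ => a + b + b * (k:ℝ) := by
      funext k; push_cast; ring
    rw [e, this]; push_cast; ring

theorem bS_le (n : ℕ) (c d : ℕ → ℝ) (h : ∀ k ≤ n, c k ≤ d k) (y : ℝ) (h0 : 0 ≤ y) (h1 : y ≤ 1) :
    bS n c y ≤ bS n d y := by
  unfold bS
  apply Finset.sum_le_sum
  intro k hk
  exact mul_le_mul_of_nonneg_right (h k (by simp at hk; omega)) (pB_nonneg n k y h0 h1)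

theorem bS_mono (n : ℕ) (c : ℕ → ℝ) (h : ∀ k < n, c k ≤ c (k+1)) (y z : ℝ) (h0 : 0 ≤ y)
    (hyz : y ≤ z) (h1 : z ≤ 1) : bS n c y ≤ bS n c z := by
  induction n generalizing c with
  | zero => simp [bS, pB]
  | succ n ih =>
    rw [bS_succ, bS_succ]
    have i1 := ih c (fun k hk => h k (by omega))
    have i2 := ih (fun k => c (k+1)) (fun k hk => h (k+1) (by omega))
    have i3 := bS_le n c (fun k => c (k+1)) (fun k hk => h k (by omega)) z (h0.trans hyz) h1
    nlinarith [mul_nonneg (sub_nonneg.2 i1) (sub_nonneg.2 (hyz.trans h1)),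
      mul_nonneg (sub_nonneg.2 i2) h0, mul_nonneg (sub_nonneg.2 i3) (sub_nonneg.2 hyz)]

theorem bS_elev (n : ℕ) (c : ℕ → ℝ) (y : ℝ) :
    bS n c y = bS (n+1) (fun k => (k:ℝ) / (n+1) * c (k-1) + ((n:ℝ)+1-k)/(n+1) * c k) y := by
  unfold bS
  simp_rw [add_mul]
  rw [Finset.sum_add_distrib, Finset.sum_range_succ' _ (n+1), Finset.sum_range_succ _ (n+1)]
  simp only [Nat.cast_zero, zero_div, zero_mul, add_zero, Nat.cast_add, Nat.cast_one, sub_self,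
    Nat.add_sub_cancel]
  rw [← Finset.sum_add_distrib]
  apply Finset.sum_congr rfl
  intro k hk
  rw [pB_elev n k (by simp at hk; omega)]
  ring

theorem Bop_eq (n : ℕ) (g : ℝ → ℝ) (y : ℝ) : Bop n g y = bS n (fun k => g ((k:ℝ)/n)) y := rfl

theorem mem_aux (n k : ℕ) (hk : k ≤ n) : (k:ℝ)/n ∈ Set.Icc (0:ℝ) 1 := by
  refine ⟨by positivity, div_le_one_of_le₀ (by exact_mod_cast hk) (by positivity)⟩

theorem Bop_mono (n : ℕ) (g : ℝ → ℝ) (hg : MonotoneOn g (Set.Icc (0:ℝ) 1)) (y z : ℝ) (h0 : 0 ≤ y)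
    (hyz : y ≤ z) (h1 : z ≤ 1) : Bop n g y ≤ Bop n g z := by
  rw [Bop_eq, Bop_eq]
  refine bS_mono n _ ?_ y z h0 hyz h1
  intro k hk
  refine hg (mem_aux n k hk.le) (mem_aux n (k+1) hk) ?_
  gcongr; simp

theorem Bop_succ_le (n : ℕ) (hn : 0 < n) (g : ℝ → ℝ) (hg : ConvexOn ℝ (Set.Icc (0:ℝ) 1) g) (y : ℝ)
    (h0 : 0 ≤ y) (h1 : y ≤ 1) : Bop (n+1) g y ≤ Bop n g y := by
  rw [Bop_eq, Bop_eq, bS_elev n]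
  refine bS_le _ _ _ ?_ y h0 h1
  intro k hk
  have hn' : (0:ℝ) < n := by exact_mod_cast hn
  rcases Nat.eq_zero_or_pos k with rfl | hk0
  · simp
    rw [div_self (by positivity)]; simp
  rcases Nat.lt_or_ge n k with h | h
  · have : k = n + 1 := by omega
    subst this
    simp
    rw [div_self (by positivity), div_self (by positivity)]; simp
  · obtain ⟨j, rfl⟩ : ∃ j, k = j + 1 := ⟨k - 1, by omega⟩
    have hj : ((j + 1 : ℕ) : ℝ) ≤ n := by exact_mod_cast h
    have := hg.2 (mem_aux n j (by omega)) (mem_aux n (j+1) h)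
      (show 0 ≤ ((j+1 : ℕ):ℝ)/(n+1) by positivity)
      (show 0 ≤ ((n:ℝ)+1-((j+1:ℕ):ℝ))/(n+1) from div_nonneg (by linarith) (by positivity))
      (by field_simp; ring)
    simp only [smul_eq_mul] at this
    refine le_trans (le_of_eq ?_) this
    congr 1
    push_cast
    field_simp
    ring

theorem le_Bop (n : ℕ) (hn : 0 < n) (g : ℝ → ℝ) (hg : ConvexOn ℝ (Set.Icc (0:ℝ) 1) g) (y : ℝ)
    (h0 : 0 ≤ y) (h1 : y ≤ 1) : g y ≤ Bop n g y := by
  have hn' : (n:ℝ) ≠ 0 := by positivity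
  have s1 := bS_affine n 1 0 y
  have s2 := bS_affine n 0 (1/n) y
  unfold bS at s1 s2
  simp only [zero_mul, add_zero, one_mul, zero_add] at s1 s2
  have := hg.map_sum_le (t := Finset.range (n+1)) (w := fun k => pB n k y)
    (p := fun k : ℕ => (k:ℝ)/n) (fun k _ => pB_nonneg n k y h0 h1) s1
    (fun k hk => mem_aux n k (by simp at hk; omega))
  simp only [smul_eq_mul] at this
  have e : ∑ k ∈ Finset.range (n+1), pB n k y * ((k:ℝ)/n) = y := by
    rw [one_div, inv_mul_cancel₀ hn', one_mul] at s2
    rw [← s2]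
    apply Finset.sum_congr rfl; intros; rw [s2]; ring
  rw [e] at this
  refine this.trans (le_of_eq ?_)
  unfold Bop
  apply Finset.sum_congr rfl; intros; ring

theorem ratio_mono (x s t : ℝ) (hx0 : 0 < x) (hx1 : x < 1) (hs : 0 < s) (hst : s ≤ t) :
    Real.log (1 + x * s) / Real.log (1 + s) ≤ Real.log (1 + x * t) / Real.log (1 + t) := by
  have ls : 0 < Real.log (1 + s) := Real.log_pos (by linarith)
  have lt : 0 < Real.log (1 + t) := Real.log_pos (by linarith)
  have lst : Real.log (1 + s) ≤ Real.log (1 + t) := Real.log_le_log (by linarith) (by linarith)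
  have hxs : 0 < x * s := by positivity
  have hxt : 0 < x * t := mul_pos hx0 (by linarith)
  set l := Real.log (1 + s) / Real.log (1 + t) with hl
  have hl0 : 0 ≤ l := by positivity
  have hl1 : l ≤ 1 := div_le_one_of_le₀ lst lt.le
  have hp : (1 + t) ^ l = 1 + s := by
    rw [Real.rpow_def_of_pos (by linarith), hl, mul_div_cancel₀ _ lt.ne', Real.exp_log (by linarith)]
  have hc := (Real.concaveOn_rpow hl0 hl1).2 (show (1:ℝ) ∈ Set.Ici 0 by simp)
    (show 1 + t ∈ Set.Ici 0 by simp; linarith) (show 0 ≤ 1 - x by linarith) hx0.le (by ring)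
  simp only [smul_eq_mul, Real.one_rpow, hp] at hc
  have h1 : 1 + x * s ≤ (1 + x * t) ^ l := by
    have : (1 - x) * 1 + x * (1 + t) = 1 + x * t := by ring
    rw [this] at hc; linarith
  have h2 := Real.log_le_log (by linarith) h1
  rw [Real.log_rpow (by linarith)] at h2
  rw [div_le_iff₀ ls]
  calc _ ≤ _ := h2
    _ = _ := by rw [hl]; field_simp

theorem aFun_eq (μ : ℝ) (n : ℕ) (x : ℝ) : aFun μ n x =
    Real.log (1 + x * (1 / (n * (1 + μ)))) / Real.log (1 + 1 / (n * (1 + μ))) := by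
  rw [mul_one_div]; rfl

theorem aFun_anti (μ : ℝ) (hμ : 0 < μ) (n : ℕ) (hn : 0 < n) (x : ℝ) (hx0 : 0 < x) (hx1 : x < 1) :
    aFun μ (n+1) x ≤ aFun μ n x := by
  rw [aFun_eq, aFun_eq]
  have hn' : (0:ℝ) < n := by exact_mod_cast hn
  apply ratio_mono x _ _ hx0 hx1 (by positivity)
  apply one_div_le_one_div_of_le (by positivity)
  gcongr; simp

theorem aFun_le_one (μ : ℝ) (hμ : 0 < μ) (n : ℕ) (hn : 0 < n) (x : ℝ) (hx0 : 0 < x) (hx1 : x < 1) :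
    aFun μ n x ≤ 1 := by
  have hn' : (0:ℝ) < n := by exact_mod_cast hn
  have : 0 < 1 / ((n:ℝ) * (1 + μ)) := by positivity
  apply div_le_one_of_le₀
  · apply Real.log_le_log (by positivity)
    gcongr
  · apply Real.log_nonneg; linarith

theorem le_aFun (μ : ℝ) (hμ : 0 < μ) (n : ℕ) (hn : 0 < n) (x : ℝ) (hx0 : 0 < x) (hx1 : x < 1) :
    x ≤ aFun μ n x := by
  rw [aFun_eq]
  have hn' : (0:ℝ) < n := by exact_mod_cast hn
  have ht : 0 < 1 / ((n:ℝ) * (1 + μ)) := by positivity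
  set t := 1 / ((n:ℝ) * (1 + μ))
  rw [le_div_iff₀ (Real.log_pos (by linarith))]
  have h := strictConcaveOn_log_Ioi.concaveOn.2 (show (1:ℝ) ∈ Set.Ioi 0 by simp)
    (show 1 + t ∈ Set.Ioi 0 by simp; linarith) (show 0 ≤ 1 - x by linarith) hx0.le (by ring)
  simp only [smul_eq_mul, Real.log_one, mul_zero, zero_add] at h
  refine h.trans (le_of_eq ?_)
  congr 1; ring

theorem stmt18 (μ : ℝ) (hμ : 0 < μ) (f : ℝ → ℝ)
    (hmono : MonotoneOn (fun t => f t / logμ μ t) (Set.Icc (0:ℝ) 1))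
    (hconv : ConvexOn ℝ (Set.Icc (0:ℝ) 1) (fun t => f t / logμ μ t))
    (n : ℕ) (hn : 0 < n) (x : ℝ) (hx : x ∈ Set.Ioo (0:ℝ) 1) :
    Lop μ (n + 1) f x ≤ Lop μ n f x ∧ f x ≤ Lop μ (n + 1) f x := by
  obtain ⟨hx0, hx1⟩ := hx
  have hL : ∀ m, Lop μ m f x = logμ μ x * Bop m (fun t => f t / logμ μ t) (aFun μ m x) := by
    intro m
    unfold Lop Bop
    simp only [mul_one_div]
  have hpos : 0 < logμ μ x := Real.log_pos (by linarith)
  have a1 := aFun_anti μ hμ n hn x hx0 hx1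
  have a2 := aFun_le_one μ hμ n hn x hx0 hx1
  have a3 := le_aFun μ hμ (n+1) n.succ_pos x hx0 hx1
  rw [hL, hL]
  constructor
  · refine mul_le_mul_of_nonneg_left ?_ hpos.le
    exact (Bop_succ_le n hn _ hconv _ (by linarith) (by linarith)).trans
      (Bop_mono n _ hmono _ _ (by linarith) a1 a2)
  · have h1 := le_Bop (n+1) n.succ_pos _ hconv (aFun μ (n+1) x) (by linarith) (by linarith)
    have h2 := hmono ⟨hx0.le, hx1.le⟩ ⟨by linarith, by linarith⟩ a3
    have h3 := mul_le_mul_of_nonneg_left (h2.trans h1) hpos.le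
    simp only [mul_div_cancel₀ _ hpos.ne'] at h3
    exact h3
end
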